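/- If a locally integrable function f on the open unit disc satisfies the BWMO condition (i.e. ‖f‖_BWMO < ∞), then the average function f̂ belongs to BO, i.e. sup_{z∈𝔻} sup_{w∈D(z,1)} |f̂(z) − f̂(w)| < ∞. -/

import Mathlib

open MeasureTheory Set

noncomputable section

/-- The normalized area measure on the plane: planar Lebesgue measure divided by `π`. -/
def dA : Measure ℂ := (ENNReal.ofReal Real.pi)⁻¹ • volume

/-- The open unit disc `𝔻`. -/
def unitDisc : Set ℂ := {z : ℂ | ‖z‖ < 1}

/-- The argument `θ` of `z`, normalized to lie in `[0, 2π)`. -/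
def theta (z : ℂ) : ℝ := toIcoMod Real.two_pi_pos 0 (Complex.arg z)

/-- The angle of `ζ`, normalized to lie in `[theta z, theta z + 2π)`;
for `ζ ∈ B(z)` this is the angle `θ̃ ∈ [θ, θ + π(1-r)]` of the paper's convention. -/
def angFrom (z ζ : ℂ) : ℝ := toIcoMod Real.two_pi_pos (theta z) (Complex.arg ζ)

/-- The polar rectangle `{ρ e^{iφ} : r₁ ≤ ρ ≤ r₂, φ₁ ≤ φ ≤ φ₂}`. -/
def polarRect (r₁ r₂ φ₁ φ₂ : ℝ) : Set ℂ :=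
  {w : ℂ | ∃ ρ φ : ℝ, r₁ ≤ ρ ∧ ρ ≤ r₂ ∧ φ₁ ≤ φ ∧ φ ≤ φ₂ ∧
    w = (ρ : ℂ) * Complex.exp ((φ : ℂ) * Complex.I)}

/-- The set `B(z)` for `z = r e^{iθ} ∈ 𝔻`. -/
def Bz (z : ℂ) : Set ℂ :=
  polarRect ‖z‖ (1 - (1 - ‖z‖) / 2) (theta z) (theta z + Real.pi * (1 - ‖z‖))

/-- The set `B(z, ζ)` for `ζ ∈ B(z)`. -/
def Bzz (z ζ : ℂ) : Set ℂ := polarRect ‖z‖ ‖ζ‖ (theta z) (angFrom z ζ)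

/-- The set `B(ζ₁, ζ₂)` for points `ζ₁ ≾ ζ₂` of `B(z)`. -/
def Bsub (z ζ₁ ζ₂ : ℂ) : Set ℂ := polarRect ‖ζ₁‖ ‖ζ₂‖ (angFrom z ζ₁) (angFrom z ζ₂)

/-- The relation `ζ₁ ≾ ζ₂` for points of `B(z)`: `ρ₁ ≤ ρ₂` and `φ₁ ≤ φ₂`. -/
def precSim (z ζ₁ ζ₂ : ℂ) : Prop := ‖ζ₁‖ ≤ ‖ζ₂‖ ∧ angFrom z ζ₁ ≤ angFrom z ζ₂

/-- The average `f̂_K = (1/|K|) ∫_K f dA` of `f` over a set `K`. -/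
def avgOn (f : ℂ → ℂ) (K : Set ℂ) : ℂ := ((dA K).toReal)⁻¹ • ∫ w in K, f w ∂dA

/-- The average function `f̂(z) = f̂_{B(z)}`. -/
def avg (f : ℂ → ℂ) (z : ℂ) : ℂ := avgOn f (Bz z)

/-- The quantity `(1/|B(z)|) |∫_{B(z,ζ)} (f(ξ) - f̂(z)) dA(ξ)|`. -/
def wQuot (f : ℂ → ℂ) (z ζ : ℂ) : ℝ :=
  ((dA (Bz z)).toReal)⁻¹ * ‖∫ ξ in Bzz z ζ, (f ξ - avg f z) ∂dA‖

/-- The BWMO condition: `‖f‖_BWMO < ∞`. -/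
def IsBWMO (f : ℂ → ℂ) : Prop := ∃ C : ℝ, ∀ z ∈ unitDisc, ∀ ζ ∈ Bz z, wQuot f z ζ ≤ C

/-- The BWMO seminorm `‖f‖_BWMO`. -/
def bwmoNorm (f : ℂ → ℂ) : ℝ :=
  sSup {c : ℝ | ∃ z ∈ unitDisc, ∃ ζ ∈ Bz z, c = wQuot f z ζ}

/-- The VWMO condition:
`(1/|B(z)|) sup_{ζ ∈ B(z)} |∫_{B(z,ζ)} (f - f̂(z)) dA| → 0` as `|z| → 1`. -/
def IsVWMO (f : ℂ → ℂ) : Prop :=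
  ∀ ε > (0:ℝ), ∃ r₀ < (1:ℝ), ∀ z ∈ unitDisc, r₀ ≤ ‖z‖ → ∀ ζ ∈ Bz z, wQuot f z ζ ≤ ε

/-- The Bergman-metric disc `D(z,1)` of radius `1` centered at `z`. -/
def Dball (z : ℂ) : Set ℂ :=
  {w : ℂ | ‖w‖ < 1 ∧ ‖(z - w) / (1 - (starRingEnd ℂ) w * z)‖ < Real.tanh 1}

/-- The hyperbolic average `f̂₁(z) = (1/|D(z,1)|) ∫_{D(z,1)} f dA` of a real-valued `f`. -/
def avg1 (f : ℂ → ℝ) (z : ℂ) : ℝ := ((dA (Dball z)).toReal)⁻¹ * ∫ w in Dball z, f w ∂dA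

/-- The mean oscillation `(1/|D(z,1)|) ∫_{D(z,1)} |f - f̂₁(z)| dA` of a real-valued `f`. -/
def meanOsc1 (f : ℂ → ℝ) (z : ℂ) : ℝ :=
  ((dA (Dball z)).toReal)⁻¹ * ∫ ξ in Dball z, |f ξ - avg1 f z| ∂dA

/-- The Berezin transform `f̃(z) = ∫_𝔻 f(w) |k_z(w)|² dA(w)`,
where `k_z(w) = (1-|z|²)/(1-w z̄)²`. -/
def berezin (f : ℂ → ℂ) (z : ℂ) : ℂ :=
  ∫ w in unitDisc, f w * ((((1 - ‖z‖ ^ 2) ^ 2 / ‖1 - w * (starRingEnd ℂ) z‖ ^ 4 : ℝ)) : ℂ) ∂dA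

/-- The example symbol of Section 4:
`f(r e^{iθ}) = (1/(r (1-r)^{b-β})) sin(1/(1-r)^b)` for `r ≥ 1/2`, and `1` for `r < 1/2`. -/
def fEx (b β : ℝ) (z : ℂ) : ℝ :=
  if ‖z‖ < 1 / 2 then 1
  else (1 / (‖z‖ * (1 - ‖z‖) ^ (b - β))) * Real.sin (1 / (1 - ‖z‖) ^ b)

end

/-!
Write `z = r e^{iθ}` and let `C` bound the BWMO quantities of `f`. Inclusion–exclusion over the four
corners bounds the integral of `f - f̂(z)` over any polar subrectangle of `B(z)` by `4 C |B(z)|`, so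
the average of `f` over a subrectangle of comparable area differs from `f̂(z)` by at most a multiple
of `C`. Two boxes whose polar coordinates differ by a small fraction of `1 - max r s` share such a
subrectangle. If the pseudohyperbolic distance of `z` and `w` is at most `t < 1`, their polar
coordinates differ by at most a multiple of `1 - max |z| |w|` (after shifting one angle by a
multiple of `2π`), so the segment between them in polar coordinates splits into a bounded number of
such small steps, and the differences of the averages add up to a multiple of `C`.
-/

section

open scoped Real ComplexConjugate

section PolarRect

theorem polarRect_eq_image2 (r₁ r₂ φ₁ φ₂ : ℝ) :
    polarRect r₁ r₂ φ₁ φ₂ = image2 (circleMap 0) (Icc r₁ r₂) (Icc φ₁ φ₂) := by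
  ext w
  simp only [polarRect, mem_ofPred_eq, mem_image2, mem_Icc, circleMap_zero]
  grind

theorem circleMap_mem_polarRect {r₁ r₂ φ₁ φ₂ ρ φ : ℝ} (hρ : ρ ∈ Icc r₁ r₂) (hφ : φ ∈ Icc φ₁ φ₂) :
    circleMap 0 ρ φ ∈ polarRect r₁ r₂ φ₁ φ₂ :=
  polarRect_eq_image2 .. ▸ mem_image2_of_mem hρ hφ

theorem isCompact_polarRect (r₁ r₂ φ₁ φ₂ : ℝ) : IsCompact (polarRect r₁ r₂ φ₁ φ₂) := by
  rw [polarRect_eq_image2, ← image_prod]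
  refine (isCompact_Icc.prod isCompact_Icc).image ?_
  simp only [circleMap_zero]
  fun_prop

theorem measurableSet_polarRect (r₁ r₂ φ₁ φ₂ : ℝ) : MeasurableSet (polarRect r₁ r₂ φ₁ φ₂) :=
  (isCompact_polarRect ..).measurableSet

theorem polarRect_mono {r₁ r₂ φ₁ φ₂ r₁' r₂' φ₁' φ₂' : ℝ} (hr₁ : r₁ ≤ r₁') (hr₂ : r₂' ≤ r₂)
    (hφ₁ : φ₁ ≤ φ₁') (hφ₂ : φ₂' ≤ φ₂) : polarRect r₁' r₂' φ₁' φ₂' ⊆ polarRect r₁ r₂ φ₁ φ₂ := by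
  simp only [polarRect_eq_image2]
  exact image2_subset (Icc_subset_Icc hr₁ hr₂) (Icc_subset_Icc hφ₁ hφ₂)

theorem polarRect_subset_unitDisc {r₁ r₂ φ₁ φ₂ : ℝ} (hr₁ : 0 ≤ r₁) (hr₂ : r₂ < 1) :
    polarRect r₁ r₂ φ₁ φ₂ ⊆ unitDisc := by
  rw [polarRect_eq_image2, image2_subset_iff]
  intro ρ hρ φ _
  rw [unitDisc, mem_ofPred_eq, norm_circleMap_zero, abs_of_nonneg (hr₁.trans hρ.1)]
  exact hρ.2.trans_lt hr₂

theorem polarRect_union_radial {r₁ r₂ r₃ : ℝ} (h₁₂ : r₁ ≤ r₂) (h₂₃ : r₂ ≤ r₃) (φ₁ φ₂ : ℝ) :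
    polarRect r₁ r₂ φ₁ φ₂ ∪ polarRect r₂ r₃ φ₁ φ₂ = polarRect r₁ r₃ φ₁ φ₂ := by
  simp only [polarRect_eq_image2]
  rw [← image2_union_left, Icc_union_Icc_eq_Icc h₁₂ h₂₃]

theorem polarRect_union_angular {φ₁ φ₂ φ₃ : ℝ} (h₁₂ : φ₁ ≤ φ₂) (h₂₃ : φ₂ ≤ φ₃) (r₁ r₂ : ℝ) :
    polarRect r₁ r₂ φ₁ φ₂ ∪ polarRect r₁ r₂ φ₂ φ₃ = polarRect r₁ r₂ φ₁ φ₃ := by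
  simp only [polarRect_eq_image2]
  rw [← image2_union_right, Icc_union_Icc_eq_Icc h₁₂ h₂₃]

theorem rotation_preimage_polarRect (ψ r₁ r₂ φ₁ φ₂ : ℝ) :
    rotation (Circle.exp ψ) ⁻¹' polarRect r₁ r₂ (φ₁ + ψ) (φ₂ + ψ) = polarRect r₁ r₂ φ₁ φ₂ := by
  have circle_mul (ρ φ : ℝ) : (Circle.exp ψ : ℂ) * circleMap 0 ρ φ = circleMap 0 ρ (φ + ψ) := by
    rw [add_comm, ← one_mul ρ, ← circleMap_zero_mul, Circle.coe_exp, circleMap_zero 1,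
      Complex.ofReal_one, one_mul, one_mul]
  ext w
  simp only [polarRect_eq_image2, mem_preimage, rotation_apply, mem_image2]
  constructor
  · rintro ⟨ρ, hρ, φ, hφ, hw⟩
    refine ⟨ρ, hρ, φ - ψ, by grind, ?_⟩
    rw [← mul_right_inj' (Circle.exp ψ).coe_ne_zero, circle_mul, sub_add_cancel, hw]
  · rintro ⟨ρ, hρ, φ, hφ, rfl⟩
    exact ⟨ρ, hρ, φ + ψ, by grind, (circle_mul ρ φ).symm⟩

theorem polarRect_add_int_mul_two_pi (r₁ r₂ φ₁ φ₂ : ℝ) (n : ℤ) :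
    polarRect r₁ r₂ (φ₁ + n * (2 * π)) (φ₂ + n * (2 * π)) = polarRect r₁ r₂ φ₁ φ₂ := by
  rw [← rotation_preimage_polarRect (n * (2 * π)) r₁ r₂ φ₁ φ₂, Circle.exp_int_mul_two_pi, map_one]
  rfl

end PolarRect

section Area

theorem polarCoord_symm_mem_polarRect_iff {r₁ r₂ δ : ℝ} (hr₁ : 0 ≤ r₁) (hδ : δ ≤ π) {p : ℝ × ℝ}
    (hp : p ∈ polarCoord.target) :
    Complex.polarCoord.symm p ∈ polarRect r₁ r₂ (-δ) δ ↔ p ∈ Icc r₁ r₂ ×ˢ Icc (-δ) δ := by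
  obtain ⟨hp₁, hp₂⟩ : 0 < p.1 ∧ p.2 ∈ Ioo (-π) π := by simpa [polarCoord] using hp
  have symm_eq : Complex.polarCoord.symm p = circleMap 0 p.1 p.2 := by
    rw [Complex.polarCoord_symm_apply, circleMap_zero, Complex.exp_mul_I]
    push_cast
    rfl
  rw [symm_eq]
  refine ⟨fun hmem ↦ ?_, fun h ↦ circleMap_mem_polarRect h.1 h.2⟩
  rw [polarRect_eq_image2] at hmem
  obtain ⟨ρ, hρ, φ, hφ, heq⟩ := hmem
  have norm_eq : ρ = p.1 := by
    simpa [abs_of_nonneg (hr₁.trans hρ.1), abs_of_pos hp₁] using congrArg norm heq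
  subst norm_eq
  obtain rfl : φ = p.2 := by
    refine eq_of_circleMap_eq hp₁.ne' ?_ heq
    rw [abs_lt]
    constructor <;> linarith [hφ.1, hφ.2, hp₂.1, hp₂.2]
  exact ⟨hρ, hφ⟩

theorem polarCoord_target_inter_Icc_prod_Icc_ae_eq {r₁ δ : ℝ} (hr₁ : 0 ≤ r₁) (hδ : δ ≤ π)
    (r₂ : ℝ) : (polarCoord.target ∩ Icc r₁ r₂ ×ˢ Icc (-δ) δ : Set (ℝ × ℝ)) =ᵐ[volume]
      Icc r₁ r₂ ×ˢ Icc (-δ) δ := by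
  have radial : (Ioi 0 ∩ Icc r₁ r₂ : Set ℝ) =ᵐ[volume] Icc r₁ r₂ := by
    simpa [inter_eq_right.2 (Icc_subset_Ici_self.trans (Ici_subset_Ici.2 hr₁))] using
      (Ioi_ae_eq_Ici (a := (0 : ℝ))).inter (ae_eq_refl (Icc r₁ r₂))
  have angular : (Ioo (-π) π ∩ Icc (-δ) δ : Set ℝ) =ᵐ[volume] Icc (-δ) δ := by
    simpa [inter_eq_right.2 (Icc_subset_Icc (neg_le_neg hδ) hδ)] using
      (Ioo_ae_eq_Icc (a := -π) (b := π)).inter (ae_eq_refl (Icc (-δ) δ))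
  rw [polarCoord_target, prod_inter_prod]
  exact Measure.set_prod_ae_eq radial angular

theorem volume_real_polarRect_symmetric {r₁ r₂ δ : ℝ} (hr₁ : 0 ≤ r₁) (hr : r₁ ≤ r₂) (hδ₀ : 0 ≤ δ)
    (hδ : δ ≤ π) : volume.real (polarRect r₁ r₂ (-δ) δ) = (r₂ ^ 2 - r₁ ^ 2) * δ := by
  have hmeas : MeasurableSet (Icc r₁ r₂ ×ˢ Icc (-δ) δ) := measurableSet_Icc.prod measurableSet_Icc
  classical
  calc volume.real (polarRect r₁ r₂ (-δ) δ)
      = ∫ p in polarCoord.target,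
          p.1 • (polarRect r₁ r₂ (-δ) δ).indicator (1 : ℂ → ℝ) (Complex.polarCoord.symm p) := by
        rw [Complex.integral_comp_polarCoord_symm,
          integral_indicator_one (measurableSet_polarRect ..)]
    _ = ∫ p in polarCoord.target, (Icc r₁ r₂ ×ˢ Icc (-δ) δ).indicator Prod.fst p := by
        refine setIntegral_congr_fun polarCoord.open_target.measurableSet fun p hp ↦ ?_
        simp only [indicator_apply, polarCoord_symm_mem_polarRect_iff hr₁ hδ hp, Pi.one_apply,
          smul_eq_mul, mul_ite, mul_one, mul_zero]
    _ = ∫ p in Icc r₁ r₂ ×ˢ Icc (-δ) δ, p.1 * 1 := by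
        rw [setIntegral_indicator hmeas,
          setIntegral_congr_set (polarCoord_target_inter_Icc_prod_Icc_ae_eq hr₁ hδ r₂)]
        simp only [mul_one]
    _ = (∫ ρ in r₁..r₂, ρ) * ∫ _ in -δ..δ, (1 : ℝ) := by
        rw [Measure.volume_eq_prod, setIntegral_prod_mul (fun ρ : ℝ ↦ ρ) (fun _ : ℝ ↦ (1 : ℝ)),
          integral_Icc_eq_integral_Ioc, integral_Icc_eq_integral_Ioc,
          intervalIntegral.integral_of_le hr, intervalIntegral.integral_of_le (by linarith)]
    _ = (r₂ ^ 2 - r₁ ^ 2) * δ := by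
        rw [integral_id, intervalIntegral.integral_const, smul_eq_mul]
        ring

theorem volume_real_polarRect {r₁ r₂ φ₁ φ₂ : ℝ} (hr₁ : 0 ≤ r₁) (hr : r₁ ≤ r₂) (hφ : φ₁ ≤ φ₂)
    (hφ' : φ₂ - φ₁ ≤ 2 * π) :
    volume.real (polarRect r₁ r₂ φ₁ φ₂) = (r₂ ^ 2 - r₁ ^ 2) * ((φ₂ - φ₁) / 2) := by
  have rotated :=
    rotation_preimage_polarRect ((φ₁ + φ₂) / 2) r₁ r₂ (-((φ₂ - φ₁) / 2)) ((φ₂ - φ₁) / 2)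
  rw [show -((φ₂ - φ₁) / 2) + (φ₁ + φ₂) / 2 = φ₁ by ring,
    show (φ₂ - φ₁) / 2 + (φ₁ + φ₂) / 2 = φ₂ by ring] at rotated
  rw [← volume_real_polarRect_symmetric hr₁ hr (by linarith) (by linarith), ← rotated,
    (rotation _).measurePreserving.measureReal_preimage
      (measurableSet_polarRect ..).nullMeasurableSet]

instance isFiniteMeasureOnCompacts_dA : IsFiniteMeasureOnCompacts dA :=
  IsFiniteMeasureOnCompacts.smul volume (by simp [Real.pi_pos])

theorem dA_polarRect_ne_top (r₁ r₂ φ₁ φ₂ : ℝ) : dA (polarRect r₁ r₂ φ₁ φ₂) ≠ ⊤ :=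
  (isCompact_polarRect ..).measure_lt_top.ne

theorem dA_real_polarRect {r₁ r₂ φ₁ φ₂ : ℝ} (hr₁ : 0 ≤ r₁) (hr : r₁ ≤ r₂) (hφ : φ₁ ≤ φ₂)
    (hφ' : φ₂ - φ₁ ≤ 2 * π) :
    dA.real (polarRect r₁ r₂ φ₁ φ₂) = (r₂ ^ 2 - r₁ ^ 2) * (φ₂ - φ₁) / (2 * π) := by
  rw [dA, measureReal_ennreal_smul_apply, volume_real_polarRect hr₁ hr hφ hφ', ENNReal.toReal_inv,
    ENNReal.toReal_ofReal Real.pi_nonneg]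
  field_simp

end Area

section Splitting

variable {E : Type*} [NormedAddCommGroup E] [NormedSpace ℝ E] {g : ℂ → E} {r₁ r₂ r₃ φ₁ φ₂ φ₃ : ℝ}

-- Exact additivity of the measure forces the overlap to be null.
theorem setIntegral_union_of_measureReal_add {α : Type*} [MeasurableSpace α] {μ : Measure α}
    {s t : Set α} {g : α → E} (ht : MeasurableSet t) (hs_fin : μ s ≠ ⊤) (ht_fin : μ t ≠ ⊤)
    (hμ : μ.real s + μ.real t = μ.real (s ∪ t)) (hg : IntegrableOn g (s ∪ t) μ) :
    ∫ x in s ∪ t, g x ∂μ = ∫ x in s, g x ∂μ + ∫ x in t, g x ∂μ := by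
  have overlap_null : μ.real (s ∩ t) = 0 := by
    linarith [measureReal_union_add_inter ht hs_fin ht_fin]
  rw [measureReal_eq_zero_iff (measure_ne_top_of_subset inter_subset_left hs_fin)] at overlap_null
  exact setIntegral_union₀ overlap_null ht.nullMeasurableSet (hg.mono_set subset_union_left)
    (hg.mono_set subset_union_right)

theorem setIntegral_polarRect_add_radial (hr₁ : 0 ≤ r₁) (h₁₂ : r₁ ≤ r₂) (h₂₃ : r₂ ≤ r₃)
    (hφ : φ₁ ≤ φ₂) (hφ' : φ₂ - φ₁ ≤ 2 * π) (hg : IntegrableOn g (polarRect r₁ r₃ φ₁ φ₂) dA) :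
    ∫ w in polarRect r₁ r₃ φ₁ φ₂, g w ∂dA =
      ∫ w in polarRect r₁ r₂ φ₁ φ₂, g w ∂dA + ∫ w in polarRect r₂ r₃ φ₁ φ₂, g w ∂dA := by
  rw [← polarRect_union_radial h₁₂ h₂₃] at hg ⊢
  refine setIntegral_union_of_measureReal_add (measurableSet_polarRect ..)
    (dA_polarRect_ne_top _ _ _ _) (dA_polarRect_ne_top _ _ _ _) ?_ hg
  rw [polarRect_union_radial h₁₂ h₂₃, dA_real_polarRect hr₁ h₁₂ hφ hφ',
    dA_real_polarRect (hr₁.trans h₁₂) h₂₃ hφ hφ', dA_real_polarRect hr₁ (h₁₂.trans h₂₃) hφ hφ']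
  ring

theorem setIntegral_polarRect_add_angular (hr₁ : 0 ≤ r₁) (hr : r₁ ≤ r₂) (h₁₂ : φ₁ ≤ φ₂)
    (h₂₃ : φ₂ ≤ φ₃) (hφ : φ₃ - φ₁ ≤ 2 * π) (hg : IntegrableOn g (polarRect r₁ r₂ φ₁ φ₃) dA) :
    ∫ w in polarRect r₁ r₂ φ₁ φ₃, g w ∂dA =
      ∫ w in polarRect r₁ r₂ φ₁ φ₂, g w ∂dA + ∫ w in polarRect r₁ r₂ φ₂ φ₃, g w ∂dA := by
  rw [← polarRect_union_angular h₁₂ h₂₃] at hg ⊢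
  refine setIntegral_union_of_measureReal_add (measurableSet_polarRect ..)
    (dA_polarRect_ne_top _ _ _ _) (dA_polarRect_ne_top _ _ _ _) ?_ hg
  rw [polarRect_union_angular h₁₂ h₂₃, dA_real_polarRect hr₁ hr h₁₂ (by linarith),
    dA_real_polarRect hr₁ hr h₂₃ (by linarith), dA_real_polarRect hr₁ hr (h₁₂.trans h₂₃) hφ]
  ring

theorem setIntegral_polarRect_inclusion_exclusion (hr₁ : 0 ≤ r₁) (hr₁₂ : r₁ ≤ r₂) (hr₂₃ : r₂ ≤ r₃)
    (hφ₁₂ : φ₁ ≤ φ₂) (hφ₂₃ : φ₂ ≤ φ₃) (hφ : φ₃ - φ₁ ≤ 2 * π)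
    (hg : IntegrableOn g (polarRect r₁ r₃ φ₁ φ₃) dA) :
    ∫ w in polarRect r₂ r₃ φ₂ φ₃, g w ∂dA =
      (∫ w in polarRect r₁ r₃ φ₁ φ₃, g w ∂dA - ∫ w in polarRect r₁ r₃ φ₁ φ₂, g w ∂dA) -
      (∫ w in polarRect r₁ r₂ φ₁ φ₃, g w ∂dA - ∫ w in polarRect r₁ r₂ φ₁ φ₂, g w ∂dA) := by
  rw [setIntegral_polarRect_add_angular hr₁ (hr₁₂.trans hr₂₃) hφ₁₂ hφ₂₃ hφ hg,
    setIntegral_polarRect_add_angular hr₁ hr₁₂ hφ₁₂ hφ₂₃ hφ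
      (hg.mono_set (polarRect_mono le_rfl hr₂₃ le_rfl le_rfl)),
    setIntegral_polarRect_add_radial hr₁ hr₁₂ hr₂₃ hφ₂₃ (by linarith)
      (hg.mono_set (polarRect_mono le_rfl le_rfl hφ₁₂ le_rfl))]
  abel

end Splitting

section Angles

theorem arg_circleMap_zero {ρ : ℝ} (hρ : 0 < ρ) (φ : ℝ) :
    (circleMap 0 ρ φ).arg = toIocMod Real.two_pi_pos (-π) φ := by
  rw [circleMap_zero, Complex.arg_real_mul _ hρ, Complex.arg_exp_mul_I]

theorem circleMap_zero_norm_arg (z : ℂ) : circleMap 0 ‖z‖ z.arg = z := by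
  rw [circleMap_zero, Complex.norm_mul_exp_arg_mul_I]

theorem theta_circleMap_zero {ρ : ℝ} (hρ : 0 < ρ) (φ : ℝ) :
    theta (circleMap 0 ρ φ) = toIcoMod Real.two_pi_pos 0 φ := by
  rw [theta, arg_circleMap_zero hρ, toIcoMod_toIocMod]

theorem theta_add_int_mul_two_pi (z : ℂ) :
    theta z + (toIcoDiv Real.two_pi_pos 0 z.arg : ℤ) * (2 * π) = z.arg := by
  rw [theta, ← zsmul_eq_mul, toIcoMod_add_toIcoDiv_zsmul]

theorem angFrom_circleMap_zero {z : ℂ} {ρ φ : ℝ} (hρ : 0 < ρ)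
    (hφ : φ ∈ Ico (theta z) (theta z + 2 * π)) : angFrom z (circleMap 0 ρ φ) = φ := by
  rw [angFrom, arg_circleMap_zero hρ, toIcoMod_toIocMod, toIcoMod_eq_self]
  exact hφ

end Angles

section PolarBox

/-- The box `B(r e^{iθ})` in polar coordinates. Unlike in `Bz`, the angle `θ` is not normalized, so
boxes can be followed continuously across the ray `θ = 0`. -/
def polarBox (r θ : ℝ) : Set ℂ := polarRect r (1 - (1 - r) / 2) θ (θ + π * (1 - r))

theorem Bz_eq_polarBox (z : ℂ) : Bz z = polarBox ‖z‖ (theta z) := rfl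

theorem polarBox_add_int_mul_two_pi (r θ : ℝ) (n : ℤ) :
    polarBox r (θ + n * (2 * π)) = polarBox r θ := by
  rw [polarBox, add_right_comm, polarRect_add_int_mul_two_pi, polarBox]

theorem Bz_eq_polarBox_arg (z : ℂ) : Bz z = polarBox ‖z‖ z.arg := by
  rw [← theta_add_int_mul_two_pi, polarBox_add_int_mul_two_pi, Bz_eq_polarBox]

theorem dA_real_polarBox {r : ℝ} (hr₀ : 0 ≤ r) (hr₁ : r < 1) (θ : ℝ) :
    dA.real (polarBox r θ) = (1 - r) ^ 2 * (1 + 3 * r) / 8 := by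
  rw [polarBox, dA_real_polarRect hr₀ (by linarith) (by nlinarith [Real.pi_pos])
    (by nlinarith [Real.pi_pos])]
  field_simp
  ring

theorem dA_real_polarBox_pos {r : ℝ} (hr₀ : 0 ≤ r) (hr₁ : r < 1) (θ : ℝ) :
    0 < dA.real (polarBox r θ) := by
  rw [dA_real_polarBox hr₀ hr₁]
  have := sub_pos.2 hr₁
  positivity

end PolarBox

section WeakOscillation

variable {f : ℂ → ℂ} {C r θ : ℝ}

/-- The BWMO quantity `|B(z)|⁻¹ sup_ζ |∫_{B(z,ζ)} (f - f̂(z)) dA|` of `f` at `z = r e^{iθ}` is at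
most `C`; the corner `ζ = ρ e^{iφ}` ranges over the polar coordinates of `B(z)`. -/
def WeakOscLE (f : ℂ → ℂ) (r θ C : ℝ) : Prop :=
  ∀ ρ ∈ Icc r (1 - (1 - r) / 2), ∀ φ ∈ Icc θ (θ + π * (1 - r)),
    ‖∫ ξ in polarRect r ρ θ φ, (f ξ - avgOn f (polarBox r θ)) ∂dA‖ ≤ C * dA.real (polarBox r θ)

theorem WeakOscLE.nonneg (h : WeakOscLE f r θ C) (hr₀ : 0 ≤ r) (hr₁ : r < 1) : 0 ≤ C := by
  have bound := h r ⟨le_rfl, by linarith⟩ θ ⟨le_rfl, by nlinarith [Real.pi_pos]⟩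
  exact nonneg_of_mul_nonneg_left ((norm_nonneg _).trans bound) (dA_real_polarBox_pos hr₀ hr₁ θ)

theorem WeakOscLE.add_int_mul_two_pi (h : WeakOscLE f r θ C) (n : ℤ) :
    WeakOscLE f r (θ + n * (2 * π)) C := by
  intro ρ hρ φ hφ
  have bound := h ρ hρ (φ - n * (2 * π)) (by grind)
  rwa [← polarRect_add_int_mul_two_pi _ _ _ _ n, sub_add_cancel,
    ← polarBox_add_int_mul_two_pi r θ n] at bound

theorem weakOscLE_theta {z : ℂ} (hz : z ∈ unitDisc) (hC : ∀ ζ ∈ Bz z, wQuot f z ζ ≤ C) :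
    WeakOscLE f ‖z‖ (theta z) C := by
  have hz₁ : ‖z‖ < 1 := hz
  have area_pos := dA_real_polarBox_pos (norm_nonneg z) hz₁ (theta z)
  intro ρ hρ φ hφ
  have ζ_mem : circleMap 0 ρ φ ∈ Bz z := circleMap_mem_polarRect hρ hφ
  have quot_le := hC _ ζ_mem
  obtain hρ₀ | hρ₀ := (norm_nonneg z |>.trans hρ.1).eq_or_lt
  -- The origin forgets the angle of the corner, but then `z = 0` and the rectangle is null.
  · have degenerate : dA (polarRect ‖z‖ ρ (theta z) φ) = 0 := by
      rw [← measureReal_eq_zero_iff (dA_polarRect_ne_top _ _ _ _),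
        dA_real_polarRect (norm_nonneg z) hρ.1 hφ.1
          (by nlinarith [hφ.2, Real.pi_pos, norm_nonneg z]),
        ← hρ₀, le_antisymm (hρ.1.trans hρ₀.ge) (norm_nonneg z)]
      ring
    rw [setIntegral_measure_zero _ degenerate, norm_zero]
    have C_nonneg : 0 ≤ C :=
      (mul_nonneg (inv_nonneg.2 ENNReal.toReal_nonneg) (norm_nonneg _)).trans quot_le
    positivity
  · have φ_mem : φ ∈ Ico (theta z) (theta z + 2 * π) :=
      ⟨hφ.1, by nlinarith [hφ.2, Real.pi_pos, norm_nonneg z]⟩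
    have wQuot_eq : wQuot f z (circleMap 0 ρ φ) = (dA.real (polarBox ‖z‖ (theta z)))⁻¹ *
        ‖∫ ξ in polarRect ‖z‖ ρ (theta z) φ, (f ξ - avgOn f (polarBox ‖z‖ (theta z))) ∂dA‖ := by
      rw [wQuot, Bzz, norm_circleMap_zero, abs_of_pos hρ₀, angFrom_circleMap_zero hρ₀ φ_mem]
      rfl
    rwa [wQuot_eq, inv_mul_le_iff₀ area_pos, mul_comm] at quot_le

theorem weakOscLE_arg {z : ℂ} (hz : z ∈ unitDisc) (hC : ∀ ζ ∈ Bz z, wQuot f z ζ ≤ C) :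
    WeakOscLE f ‖z‖ z.arg C :=
  theta_add_int_mul_two_pi z ▸ (weakOscLE_theta hz hC).add_int_mul_two_pi _

theorem weakOscLE_of_pos (hC : ∀ z ∈ unitDisc, ∀ ζ ∈ Bz z, wQuot f z ζ ≤ C) (hr₀ : 0 < r)
    (hr₁ : r < 1) (θ : ℝ) : WeakOscLE f r θ C := by
  have norm_eq : ‖circleMap 0 r θ‖ = r := by rw [norm_circleMap_zero, abs_of_pos hr₀]
  have z_mem : circleMap 0 r θ ∈ unitDisc := norm_eq.trans_lt hr₁
  have h := (weakOscLE_theta z_mem (hC _ z_mem)).add_int_mul_two_pi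
    (toIcoDiv Real.two_pi_pos 0 θ)
  rwa [norm_eq, theta_circleMap_zero hr₀, ← zsmul_eq_mul, toIcoMod_add_toIcoDiv_zsmul] at h

end WeakOscillation

section LocalComparison

variable {f : ℂ → ℂ} {C r s θ η : ℝ}

theorem integrableOn_polarRect (hf : LocallyIntegrableOn f unitDisc dA) {r₁ r₂ : ℝ} (hr₁ : 0 ≤ r₁)
    (hr₂ : r₂ < 1) (φ₁ φ₂ : ℝ) : IntegrableOn f (polarRect r₁ r₂ φ₁ φ₂) dA :=
  hf.integrableOn_compact_subset (polarRect_subset_unitDisc hr₁ hr₂) (isCompact_polarRect ..)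

theorem avgOn_sub_const {K : Set ℂ} (hf : IntegrableOn f K dA) (hK : 0 < dA.real K) (v : ℂ) :
    avgOn f K - v = (dA.real K)⁻¹ • ∫ ξ in K, (f ξ - v) ∂dA := by
  have hK_fin : dA K ≠ ⊤ := fun h ↦ hK.ne' (by simp [Measure.real, h])
  rw [integral_sub hf (integrableOn_const hK_fin), setIntegral_const, smul_sub,
    inv_smul_smul₀ hK.ne']
  rfl

theorem WeakOscLE.norm_setIntegral_polarRect_le (h : WeakOscLE f r θ C)
    (hf : LocallyIntegrableOn f unitDisc dA) (hr₀ : 0 ≤ r) (hr₁ : r < 1) {a b c d : ℝ}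
    (hra : r ≤ a) (hab : a ≤ b) (hb : b ≤ 1 - (1 - r) / 2) (hθc : θ ≤ c) (hcd : c ≤ d)
    (hd : d ≤ θ + π * (1 - r)) :
    ‖∫ ξ in polarRect a b c d, (f ξ - avgOn f (polarBox r θ)) ∂dA‖ ≤
      4 * (C * dA.real (polarBox r θ)) := by
  have integrable : IntegrableOn (fun ξ ↦ f ξ - avgOn f (polarBox r θ)) (polarRect r b θ d) dA :=
    (integrableOn_polarRect hf hr₀ (by linarith) ..).sub
      (integrableOn_const (dA_polarRect_ne_top _ _ _ _))
  rw [setIntegral_polarRect_inclusion_exclusion hr₀ hra hab hθc hcd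
    (by nlinarith [Real.pi_pos]) integrable]
  have hb_mem : b ∈ Icc r (1 - (1 - r) / 2) := ⟨hra.trans hab, hb⟩
  have ha_mem : a ∈ Icc r (1 - (1 - r) / 2) := ⟨hra, hab.trans hb⟩
  have hd_mem : d ∈ Icc θ (θ + π * (1 - r)) := ⟨hθc.trans hcd, hd⟩
  have hc_mem : c ∈ Icc θ (θ + π * (1 - r)) := ⟨hθc, hcd.trans hd⟩
  refine (norm_sub_le_of_le
    (norm_sub_le_of_le (h b hb_mem d hd_mem) (h b hb_mem c hc_mem))
    (norm_sub_le_of_le (h a ha_mem d hd_mem) (h a ha_mem c hc_mem))).trans_eq ?_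
  ring

theorem WeakOscLE.norm_avgOn_polarRect_sub_le (h : WeakOscLE f r θ C)
    (hf : LocallyIntegrableOn f unitDisc dA) (hr₀ : 0 ≤ r) (hr₁ : r < 1) {a b c d κ : ℝ}
    (hra : r ≤ a) (hab : a ≤ b) (hb : b ≤ 1 - (1 - r) / 2) (hθc : θ ≤ c) (hcd : c ≤ d)
    (hd : d ≤ θ + π * (1 - r)) (hpos : 0 < dA.real (polarRect a b c d))
    (hκ : dA.real (polarBox r θ) ≤ κ * dA.real (polarRect a b c d)) :
    ‖avgOn f (polarRect a b c d) - avgOn f (polarBox r θ)‖ ≤ 4 * κ * C := by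
  have C_nonneg := h.nonneg hr₀ hr₁
  rw [avgOn_sub_const (integrableOn_polarRect hf (hr₀.trans hra) (by linarith) ..) hpos, norm_smul,
    norm_inv, Real.norm_of_nonneg hpos.le, inv_mul_le_iff₀ hpos]
  calc ‖∫ ξ in polarRect a b c d, (f ξ - avgOn f (polarBox r θ)) ∂dA‖
      ≤ 4 * (C * dA.real (polarBox r θ)) :=
        h.norm_setIntegral_polarRect_le hf hr₀ hr₁ hra hab hb hθc hcd hd
    _ ≤ 4 * (C * (κ * dA.real (polarRect a b c d))) := by gcongr
    _ = dA.real (polarRect a b c d) * (4 * κ * C) := by ring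

/-- The quarter-size box with corner `m e^{ic}`. It is contained in `polarBox r θ` for every nearby
`(r, θ)` with `r ≤ m` and `θ ≤ c`, and serves to compare the averages over two such boxes. -/
def quarterBox (m c : ℝ) : Set ℂ :=
  polarRect m (m + (1 - m) / 4) c (c + π * (1 - m) / 2)

theorem dA_real_quarterBox {m : ℝ} (hm₀ : 0 ≤ m) (hm₁ : m < 1) (c : ℝ) :
    dA.real (quarterBox m c) = (1 - m) ^ 2 * (1 + 7 * m) / 64 := by
  rw [quarterBox, dA_real_polarRect hm₀ (by linarith) (by nlinarith [Real.pi_pos])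
    (by nlinarith [Real.pi_pos])]
  field_simp
  ring

theorem dA_real_polarBox_le_quarterBox {m : ℝ} (hr₀ : 0 ≤ r) (hrm : r ≤ m) (hm₁ : m < 1)
    (hm : m - r ≤ (1 - m) / 4) (θ c : ℝ) :
    dA.real (polarBox r θ) ≤ 50 * dA.real (quarterBox m c) := by
  rw [dA_real_polarBox hr₀ (by linarith), dA_real_quarterBox (hr₀.trans hrm) hm₁]
  have side_le : (1 - r) ^ 2 ≤ (5 / 4 * (1 - m)) ^ 2 := by gcongr <;> linarith
  nlinarith [mul_nonneg (sq_nonneg (1 - r)) hr₀, sq_nonneg (1 - m),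
    mul_nonneg (sq_nonneg (1 - m)) (hr₀.trans hrm)]

theorem WeakOscLE.norm_avgOn_quarterBox_sub_le (h : WeakOscLE f r θ C)
    (hf : LocallyIntegrableOn f unitDisc dA) {m c : ℝ} (hr₀ : 0 ≤ r) (hrm : r ≤ m) (hm₁ : m < 1)
    (hm : m - r ≤ (1 - m) / 4) (hθc : θ ≤ c) (hc : c - θ ≤ π * (1 - m) / 2) :
    ‖avgOn f (quarterBox m c) - avgOn f (polarBox r θ)‖ ≤ 200 * C := by
  have area_pos : 0 < dA.real (quarterBox m c) := by
    rw [dA_real_quarterBox (hr₀.trans hrm) hm₁]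
    have := sub_pos.2 hm₁
    have := hr₀.trans hrm
    positivity
  refine (h.norm_avgOn_polarRect_sub_le hf hr₀ (hrm.trans_lt hm₁) hrm (by linarith) (by linarith)
    hθc (by nlinarith [Real.pi_pos]) (by nlinarith [Real.pi_pos]) area_pos
    (dA_real_polarBox_le_quarterBox hr₀ hrm hm₁ hm θ c)).trans_eq ?_
  ring

theorem WeakOscLE.norm_avgOn_polarBox_sub_le (h₁ : WeakOscLE f r θ C) (h₂ : WeakOscLE f s η C)
    (hf : LocallyIntegrableOn f unitDisc dA) (hr₀ : 0 ≤ r) (hr₁ : r < 1) (hs₀ : 0 ≤ s) (hs₁ : s < 1)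
    (hrs : |r - s| ≤ (1 - max r s) / 4) (hθη : |θ - η| ≤ π * (1 - max r s) / 2) :
    ‖avgOn f (polarBox r θ) - avgOn f (polarBox s η)‖ ≤ 400 * C := by
  have max_lt_one : max r s < 1 := max_lt hr₁ hs₁
  let Q := quarterBox (max r s) (max θ η)
  have compare_left : ‖avgOn f Q - avgOn f (polarBox r θ)‖ ≤ 200 * C :=
    h₁.norm_avgOn_quarterBox_sub_le hf hr₀ (le_max_left ..) max_lt_one
      (by grind) (le_max_left ..) (by grind)
  have compare_right : ‖avgOn f Q - avgOn f (polarBox s η)‖ ≤ 200 * C :=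
    h₂.norm_avgOn_quarterBox_sub_le hf hs₀ (le_max_right ..) max_lt_one
      (by grind) (le_max_right ..) (by grind)
  rw [norm_sub_rev] at compare_left
  linarith [norm_sub_le_norm_sub_add_norm_sub (avgOn f (polarBox r θ)) (avgOn f Q)
    (avgOn f (polarBox s η))]

theorem dist_lineMap_natCast_div_succ {E : Type*} [SeminormedAddCommGroup E] [NormedSpace ℝ E]
    (x y : E) (k N : ℕ) :
    dist (AffineMap.lineMap x y (k / N : ℝ)) (AffineMap.lineMap x y ((k + 1 : ℕ) / N : ℝ)) =
      dist x y / N := by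
  rw [dist_lineMap_lineMap, dist_comm, Real.dist_eq, ← sub_div, Nat.cast_succ, add_sub_cancel_left,
    abs_of_nonneg (by positivity), one_div_mul_eq_div]

theorem norm_avgOn_polarBox_sub_le_of_segment {N : ℕ} (hN : 0 < N)
    (h : ∀ t ∈ Icc (0 : ℝ) 1, WeakOscLE f (AffineMap.lineMap r s t) (AffineMap.lineMap θ η t) C)
    (hf : LocallyIntegrableOn f unitDisc dA) (hr₀ : 0 ≤ r) (hr₁ : r < 1) (hs₀ : 0 ≤ s) (hs₁ : s < 1)
    (hrs : 4 * |r - s| ≤ N * (1 - max r s)) (hθη : 2 * |θ - η| ≤ N * (π * (1 - max r s))) :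
    ‖avgOn f (polarBox r θ) - avgOn f (polarBox s η)‖ ≤ N * (400 * C) := by
  have hN' : (0 : ℝ) < N := Nat.cast_pos.2 hN
  let R (k : ℕ) : ℝ := AffineMap.lineMap r s (k / N : ℝ)
  let Θ (k : ℕ) : ℝ := AffineMap.lineMap θ η (k / N : ℝ)
  have frac_mem {k : ℕ} (hk : k ≤ N) : (k / N : ℝ) ∈ Icc (0 : ℝ) 1 :=
    ⟨by positivity, div_le_one_of_le₀ (by exact_mod_cast hk) hN'.le⟩
  have R_mem {k : ℕ} (hk : k ≤ N) : R k ∈ Icc 0 (max r s) :=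
    (convex_Icc 0 (max r s)).lineMap_mem ⟨hr₀, le_max_left ..⟩ ⟨hs₀, le_max_right ..⟩ (frac_mem hk)
  have avg_step {k : ℕ} (hk : k < N) :
      dist (avgOn f (polarBox (R k) (Θ k))) (avgOn f (polarBox (R (k + 1)) (Θ (k + 1)))) ≤
        400 * C := by
    have hRk := R_mem hk.le
    have hRk' := R_mem (Nat.succ_le_of_lt hk)
    have max_lt_one : max r s < 1 := max_lt hr₁ hs₁
    have max_le : max (R k) (R (k + 1)) ≤ max r s := max_le hRk.2 hRk'.2
    rw [dist_eq_norm]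
    refine (h _ (frac_mem hk.le)).norm_avgOn_polarBox_sub_le (h _ (frac_mem hk)) hf hRk.1
      (hRk.2.trans_lt max_lt_one) hRk'.1 (hRk'.2.trans_lt max_lt_one) ?_ ?_
    · rw [← Real.dist_eq, dist_lineMap_natCast_div_succ, Real.dist_eq, div_le_iff₀ hN']
      nlinarith
    · rw [← Real.dist_eq, dist_lineMap_natCast_div_succ, Real.dist_eq, div_le_iff₀ hN']
      nlinarith [mul_pos hN' Real.pi_pos]
  have telescoped := dist_le_range_sum_of_dist_le
    (f := fun k ↦ avgOn f (polarBox (R k) (Θ k))) N (d := fun _ ↦ 400 * C) avg_step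
  simpa [R, Θ, hN'.ne', dist_eq_norm] using telescoped

end LocalComparison

section PseudohyperbolicDistance

variable {z w : ℂ} {t : ℝ}

theorem norm_one_sub_conj_mul_sq_sub_norm_sub_sq (z w : ℂ) :
    ‖1 - conj w * z‖ ^ 2 - ‖z - w‖ ^ 2 = (1 - ‖z‖ ^ 2) * (1 - ‖w‖ ^ 2) := by
  simp only [Complex.sq_norm, Complex.normSq_apply, Complex.sub_re, Complex.sub_im, Complex.mul_re,
    Complex.mul_im, Complex.conj_re, Complex.conj_im, Complex.one_re, Complex.one_im]
  ring

theorem one_sub_norm_le_norm_one_sub_conj_mul (hz : ‖z‖ ≤ 1) :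
    1 - ‖w‖ ≤ ‖1 - conj w * z‖ := by
  calc 1 - ‖w‖ ≤ ‖(1 : ℂ)‖ - ‖conj w * z‖ := by
        rw [norm_one, norm_mul, Complex.norm_conj]
        linarith [mul_le_of_le_one_right (norm_nonneg w) hz]
    _ ≤ ‖1 - conj w * z‖ := norm_sub_norm_le ..

theorem norm_one_sub_conj_mul_pos (hz : ‖z‖ ≤ 1) (hw : ‖w‖ < 1) : 0 < ‖1 - conj w * z‖ :=
  (sub_pos.2 hw).trans_le (one_sub_norm_le_norm_one_sub_conj_mul hz)

theorem norm_one_sub_conj_mul_comm (z w : ℂ) : ‖1 - conj w * z‖ = ‖1 - conj z * w‖ := by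
  rw [← Complex.norm_conj, map_sub, map_one, map_mul, Complex.conj_conj, mul_comm]

theorem one_sub_sq_mul_norm_one_sub_conj_mul_le (hz : ‖z‖ < 1) (hw : ‖w‖ < 1)
    (hzw : ‖z - w‖ ≤ t * ‖1 - conj w * z‖) :
    (1 - t ^ 2) * ‖1 - conj w * z‖ ≤ 4 * (1 - ‖z‖) := by
  have gap := one_sub_norm_le_norm_one_sub_conj_mul (w := w) hz.le
  refine le_of_mul_le_mul_right ?_ (norm_one_sub_conj_mul_pos hz.le hw)
  calc (1 - t ^ 2) * ‖1 - conj w * z‖ * ‖1 - conj w * z‖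
      = ‖1 - conj w * z‖ ^ 2 - (t * ‖1 - conj w * z‖) ^ 2 := by ring
    _ ≤ ‖1 - conj w * z‖ ^ 2 - ‖z - w‖ ^ 2 := by gcongr
    _ = (1 + ‖z‖) * (1 - ‖z‖) * ((1 + ‖w‖) * (1 - ‖w‖)) := by
        rw [norm_one_sub_conj_mul_sq_sub_norm_sub_sq]
        ring
    _ ≤ 2 * (1 - ‖z‖) * (2 * ‖1 - conj w * z‖) := by
        have := sub_pos.2 hz
        have := sub_pos.2 hw
        gcongr <;> linarith
    _ = 4 * (1 - ‖z‖) * ‖1 - conj w * z‖ := by ring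

theorem one_sub_sq_mul_norm_one_sub_conj_mul_le_one_sub_max (hz : ‖z‖ < 1) (hw : ‖w‖ < 1)
    (hzw : ‖z - w‖ ≤ t * ‖1 - conj w * z‖) :
    (1 - t ^ 2) * ‖1 - conj w * z‖ ≤ 4 * (1 - max ‖z‖ ‖w‖) := by
  obtain hmax | hmax := max_choice ‖z‖ ‖w‖ <;> rw [hmax]
  · exact one_sub_sq_mul_norm_one_sub_conj_mul_le hz hw hzw
  · rw [norm_one_sub_conj_mul_comm] at hzw ⊢
    rw [norm_sub_rev] at hzw
    exact one_sub_sq_mul_norm_one_sub_conj_mul_le hw hz hzw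

theorem abs_toIocMod_le_pi_mul_norm {ρ : ℝ} (hρ : 0 ≤ ρ) (φ : ℝ) :
    |toIocMod Real.two_pi_pos (-π) φ| ≤ π * ‖1 - circleMap 0 ρ φ‖ := by
  have radial : ‖circleMap 0 ρ φ - circleMap 0 1 φ‖ ≤ ‖1 - circleMap 0 ρ φ‖ := by
    calc ‖circleMap 0 ρ φ - circleMap 0 1 φ‖ = |‖(1 : ℂ)‖ - ‖circleMap 0 ρ φ‖| := by
          rw [circleMap_zero, circleMap_zero, ← sub_mul, norm_mul, Complex.norm_exp_ofReal_mul_I,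
            ← Complex.ofReal_sub, Complex.norm_real, Real.norm_eq_abs, norm_mul,
            Complex.norm_exp_ofReal_mul_I, Complex.norm_real, Real.norm_of_nonneg hρ, norm_one,
            abs_sub_comm, mul_one, mul_one]
      _ ≤ ‖1 - circleMap 0 ρ φ‖ := abs_norm_sub_norm_le ..
  calc |toIocMod Real.two_pi_pos (-π) φ|
      = InnerProductGeometry.angle (1 : ℂ) (circleMap 0 1 φ) := by
        rw [circleMap_zero, Complex.ofReal_one, one_mul, Complex.angle_one_left
          (Complex.exp_ne_zero _), Complex.arg_exp_mul_I]
    _ ≤ π / 2 * ‖1 - circleMap 0 1 φ‖ := by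
        apply Complex.angle_le_mul_norm_sub <;> simp
    _ ≤ π / 2 * (‖1 - circleMap 0 ρ φ‖ + ‖circleMap 0 ρ φ - circleMap 0 1 φ‖) := by
        gcongr
        exact norm_sub_le_norm_sub_add_norm_sub ..
    _ ≤ π / 2 * (‖1 - circleMap 0 ρ φ‖ + ‖1 - circleMap 0 ρ φ‖) := by gcongr
    _ = π * ‖1 - circleMap 0 ρ φ‖ := by ring

theorem conj_mul_eq_circleMap (z w : ℂ) :
    conj w * z = circleMap 0 (‖w‖ * ‖z‖) (z.arg - w.arg) := by
  rw [sub_eq_neg_add, ← circleMap_zero_mul, ← conj_circleMap_zero, circleMap_zero_norm_arg,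
    circleMap_zero_norm_arg]

theorem exists_abs_arg_sub_le (z w : ℂ) :
    ∃ n : ℤ, |z.arg - (w.arg + n * (2 * π))| ≤ π * ‖1 - conj w * z‖ := by
  refine ⟨toIocDiv Real.two_pi_pos (-π) (z.arg - w.arg), ?_⟩
  rw [conj_mul_eq_circleMap]
  convert abs_toIocMod_le_pi_mul_norm (by positivity : 0 ≤ ‖w‖ * ‖z‖) (z.arg - w.arg) using 2
  rw [toIocMod, zsmul_eq_mul]
  ring

end PseudohyperbolicDistance

section BoundedOscillation

variable {f : ℂ → ℂ} {C : ℝ} {z w : ℂ}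

theorem weakOscLE_lineMap (hC : ∀ z ∈ unitDisc, ∀ ζ ∈ Bz z, wQuot f z ζ ≤ C)
    (hz : z ∈ unitDisc) (hw : w ∈ unitDisc) (hzw : z ≠ w) (n : ℤ) {t : ℝ} (ht : t ∈ Icc 0 1) :
    WeakOscLE f (AffineMap.lineMap ‖z‖ ‖w‖ t)
      (AffineMap.lineMap z.arg (w.arg + n * (2 * π)) t) C := by
  -- Radius `0` can only occur at an endpoint, where the hypothesis applies to `z` or `w` itself.
  obtain rfl | ht₀ := ht.1.eq_or_lt
  · simpa using weakOscLE_arg hz (hC z hz)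
  obtain rfl | ht₁ := ht.2.eq_or_lt
  · simpa using (weakOscLE_arg hw (hC w hw)).add_int_mul_two_pi n
  have radius_lt_one : AffineMap.lineMap ‖z‖ ‖w‖ t < 1 :=
    (convex_Iio (1 : ℝ)).lineMap_mem hz hw ht
  refine weakOscLE_of_pos hC ?_ radius_lt_one _
  rw [AffineMap.lineMap_apply_ring]
  have := sub_pos.2 ht₁
  by_cases hz₀ : z = 0
  · have := norm_pos_iff.2 (hz₀ ▸ hzw.symm)
    positivity
  · have := norm_pos_iff.2 hz₀
    positivity

theorem norm_avg_sub_le (hf : LocallyIntegrableOn f unitDisc dA)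
    (hC : ∀ z ∈ unitDisc, ∀ ζ ∈ Bz z, wQuot f z ζ ≤ C) (hz : z ∈ unitDisc) (hw : w ∈ unitDisc)
    {t : ℝ} (ht : t < 1) (hzw : ‖z - w‖ ≤ t * ‖1 - conj w * z‖) {N : ℕ}
    (hN : 16 / (1 - t ^ 2) ≤ N) : ‖avg f z - avg f w‖ ≤ N * (400 * C) := by
  have hz₁ : ‖z‖ < 1 := hz
  have hw₁ : ‖w‖ < 1 := hw
  have δ_pos := norm_one_sub_conj_mul_pos hz₁.le hw₁
  have t_nonneg : 0 ≤ t := nonneg_of_mul_nonneg_left ((norm_nonneg _).trans hzw) δ_pos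
  have κ_pos : 0 < 1 - t ^ 2 := by nlinarith
  have N_pos : 0 < N := Nat.cast_pos.1 ((by positivity : 0 < 16 / (1 - t ^ 2)).trans_le hN)
  have C_nonneg : 0 ≤ C := (weakOscLE_arg hz (hC z hz)).nonneg (norm_nonneg z) hz₁
  obtain rfl | hne := eq_or_ne z w
  · rw [sub_self, norm_zero]
    positivity
  have scale_le : 4 * ‖1 - conj w * z‖ ≤ N * (1 - max ‖z‖ ‖w‖) := by
    rw [div_le_iff₀ κ_pos] at hN
    have δ_le := one_sub_sq_mul_norm_one_sub_conj_mul_le_one_sub_max hz₁ hw₁ hzw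
    have gap_pos : 0 < 1 - max ‖z‖ ‖w‖ := sub_pos.2 (max_lt hz₁ hw₁)
    refine le_of_mul_le_mul_left ?_ κ_pos
    linarith [mul_le_mul_of_nonneg_right hN gap_pos.le]
  have radial_le : |‖z‖ - ‖w‖| ≤ ‖1 - conj w * z‖ :=
    (abs_norm_sub_norm_le z w).trans (hzw.trans (mul_le_of_le_one_left δ_pos.le ht.le))
  obtain ⟨n, angular_le⟩ := exists_abs_arg_sub_le z w
  rw [avg, avg, Bz_eq_polarBox_arg, Bz_eq_polarBox_arg, ← polarBox_add_int_mul_two_pi _ w.arg n]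
  refine norm_avgOn_polarBox_sub_le_of_segment N_pos
    (fun _ ↦ weakOscLE_lineMap hC hz hw hne n) hf (norm_nonneg z) hz₁ (norm_nonneg w) hw₁ ?_ ?_
  · linarith
  · nlinarith [Real.pi_pos]

theorem bwmo_avg_mem_BO_general {t : ℝ} (ht : t < 1) :
    ∃ K, ∀ f C, LocallyIntegrableOn f unitDisc dA →
      (∀ z ∈ unitDisc, ∀ ζ ∈ Bz z, wQuot f z ζ ≤ C) →
      ∀ z ∈ unitDisc, ∀ w ∈ unitDisc, ‖(z - w) / (1 - conj w * z)‖ ≤ t →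
        ‖avg f z - avg f w‖ ≤ K * C := by
  obtain ⟨N, hN⟩ := exists_nat_ge (16 / (1 - t ^ 2))
  refine ⟨N * 400, fun f C hf hC z hz w hw hzw ↦ ?_⟩
  rw [norm_div, div_le_iff₀ (norm_one_sub_conj_mul_pos (le_of_lt hz) hw)] at hzw
  rw [mul_assoc]
  exact norm_avg_sub_le hf hC hz hw ht hzw hN

end BoundedOscillation

end

/-- If a locally integrable `f` on `𝔻` satisfies the BWMO condition, then
the average function `f̂` is of bounded oscillation:
`sup_{z∈𝔻} sup_{w∈D(z,1)} |f̂(z) - f̂(w)| < ∞`. -/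
theorem bwmo_avg_mem_BO (f : ℂ → ℂ) (hf : MeasureTheory.LocallyIntegrableOn f unitDisc dA)
    (hbwmo : IsBWMO f) :
    ∃ C : ℝ, ∀ z ∈ unitDisc, ∀ w ∈ Dball z, ‖avg f z - avg f w‖ ≤ C := by
  obtain ⟨C, hC⟩ := hbwmo
  obtain ⟨K, hK⟩ := bwmo_avg_mem_BO_general (Real.tanh_lt_one 1)
  exact ⟨K * C, fun z hz w hw ↦ hK f C hf hC z hz w hw.1 hw.2.le⟩
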